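/- arXiv:1208.2162 — 6 statements merged into one kernel-verified Lean document; each statement's English description precedes it below -/
import Mathlib

section
/- Let d ≥ 1 and let Λ be a trace-preserving linear map on d×d complex matrices. Then the Choi–Jamiołkowski matrix (id⊗Λ)(P₊) is a QC state if and only if (id⊗Λ)(ρ) is a QC state for every bipartite state ρ on ℂ^d ⊗ ℂ^d. -/
open Matrix Kronecker BigOperators
open scoped ComplexOrder

noncomputable section

/-- Rank-one projector `|v⟩⟨v|`. -/
def proj {n : Type*} (v : n → ℂ) : Matrix n n ℂ :=
  Matrix.of fun a b => v a * star (v b)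

/-- `e` is an orthonormal basis (an orthonormal family of `d` vectors) of `ℂ^d`. -/
def ONB (d : ℕ) (e : Fin d → Fin d → ℂ) : Prop :=
  ∀ i j, star (e i) ⬝ᵥ e j = if i = j then 1 else 0

/-- A quantum state: positive semidefinite with unit trace. -/
def IsState {n : Type*} [Fintype n] [DecidableEq n] (ρ : Matrix n n ℂ) : Prop :=
  ρ.PosSemidef ∧ ρ.trace = 1

/-- The maximally entangled projector `P₊ = (1/d) ∑_{i,j} |ii⟩⟨jj|`. -/
def Pplus (d : ℕ) : Matrix (Fin d × Fin d) (Fin d × Fin d) ℂ :=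
  Matrix.of fun p q => if p.1 = p.2 ∧ q.1 = q.2 then (d : ℂ)⁻¹ else 0

/-- `id ⊗ Λ`: the extension of `Λ` acting on the second tensor factor. -/
def idTensor {dA dB : ℕ}
    (Λ : Matrix (Fin dB) (Fin dB) ℂ → Matrix (Fin dB) (Fin dB) ℂ)
    (M : Matrix (Fin dA × Fin dB) (Fin dA × Fin dB) ℂ) :
    Matrix (Fin dA × Fin dB) (Fin dA × Fin dB) ℂ :=
  Matrix.of fun p q => Λ (Matrix.of fun b b' => M (p.1, b) (q.1, b')) p.2 q.2

/-- `Λ ⊗ id`: the extension of `Λ` acting on the first tensor factor. -/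
def tensorId {dA dB : ℕ}
    (Λ : Matrix (Fin dA) (Fin dA) ℂ → Matrix (Fin dA) (Fin dA) ℂ)
    (M : Matrix (Fin dA × Fin dB) (Fin dA × Fin dB) ℂ) :
    Matrix (Fin dA × Fin dB) (Fin dA × Fin dB) ℂ :=
  Matrix.of fun p q => Λ (Matrix.of fun a a' => M (a, p.2) (a', q.2)) p.1 q.1

/-- Partial trace over the first factor. -/
def ptraceA {dA dB : ℕ} (M : Matrix (Fin dA × Fin dB) (Fin dA × Fin dB) ℂ) :
    Matrix (Fin dB) (Fin dB) ℂ :=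
  Matrix.of fun b b' => ∑ a, M (a, b) (a, b')

/-- Partial trace over the second factor. -/
def ptraceB {dA dB : ℕ} (M : Matrix (Fin dA × Fin dB) (Fin dA × Fin dB) ℂ) :
    Matrix (Fin dA) (Fin dA) ℂ :=
  Matrix.of fun a a' => ∑ b, M (a, b) (a', b)

/-- Trace preserving map. -/
def TracePreserving {d : ℕ}
    (Λ : Matrix (Fin d) (Fin d) ℂ → Matrix (Fin d) (Fin d) ℂ) : Prop :=
  ∀ X, (Λ X).trace = X.trace

/-- QC (quantum–classical) bipartite state. -/
def IsQC {dA dB : ℕ} (σ : Matrix (Fin dA × Fin dB) (Fin dA × Fin dB) ℂ) : Prop :=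
  ∃ (e : Fin dB → Fin dB → ℂ) (p : Fin dB → ℝ)
    (ρ : Fin dB → Matrix (Fin dA) (Fin dA) ℂ),
    ONB dB e ∧ (∀ i, 0 ≤ p i) ∧ (∑ i, p i) = 1 ∧ (∀ i, IsState (ρ i)) ∧
      σ = ∑ i, (p i : ℂ) • (ρ i ⊗ₖ proj (e i))

/-- CQ (classical–quantum) bipartite state. -/
def IsCQ {dA dB : ℕ} (σ : Matrix (Fin dA × Fin dB) (Fin dA × Fin dB) ℂ) : Prop :=
  ∃ (e : Fin dA → Fin dA → ℂ) (p : Fin dA → ℝ)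
    (ρ : Fin dA → Matrix (Fin dB) (Fin dB) ℂ),
    ONB dA e ∧ (∀ i, 0 ≤ p i) ∧ (∑ i, p i) = 1 ∧ (∀ i, IsState (ρ i)) ∧
      σ = ∑ i, (p i : ℂ) • (proj (e i) ⊗ₖ ρ i)

/-- CC (classical–classical) bipartite state. -/
def IsCC {dA dB : ℕ} (σ : Matrix (Fin dA × Fin dB) (Fin dA × Fin dB) ℂ) : Prop :=
  ∃ (e : Fin dA → Fin dA → ℂ) (f : Fin dB → Fin dB → ℂ) (p : Fin dA → Fin dB → ℝ),
    ONB dA e ∧ ONB dB f ∧ (∀ i j, 0 ≤ p i j) ∧ (∑ i, ∑ j, p i j) = 1 ∧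
      σ = ∑ i, ∑ j, (p i j : ℂ) • (proj (e i) ⊗ₖ proj (f j))

lemma aux_pplus (d : ℕ) (hd : 1 ≤ d) : IsState (Pplus d) := by
  have hd0 : (d : ℂ) ≠ 0 := by
    exact_mod_cast (by omega : d ≠ 0)
  constructor
  · have h : Pplus d = (d : ℂ)⁻¹ • vecMulVec (fun p : Fin d × Fin d => if p.1 = p.2 then (1:ℂ) else 0)
        (star (fun p : Fin d × Fin d => if p.1 = p.2 then (1:ℂ) else 0)) := by
      ext p q
      simp only [Pplus, Matrix.of_apply, Matrix.smul_apply, vecMulVec_apply, Pi.star_apply]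
      by_cases h1 : p.1 = p.2 <;> by_cases h2 : q.1 = q.2 <;> simp [h1, h2]
    rw [h]
    apply PosSemidef.smul (posSemidef_vecMulVec_self_star _)
    rw [inv_nonneg]
    exact_mod_cast Nat.zero_le d
  · simp [Matrix.trace, Pplus, Fintype.sum_prod_type, hd0]

lemma aux_psd {d : ℕ} (F : Matrix (Fin d) (Fin d) ℂ) (hF : F.PosSemidef)
    (ρ : Matrix (Fin d × Fin d) (Fin d × Fin d) ℂ) (hρ : ρ.PosSemidef) :
    (Matrix.of fun a a' => ∑ i, ∑ j, F i j * ρ (a, i) (a', j) :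
      Matrix (Fin d) (Fin d) ℂ).PosSemidef := by
  obtain ⟨B, hB⟩ : ∃ B : Matrix (Fin d) (Fin d) ℂ, F = Bᴴ * B := by
    open scoped MatrixOrder in
    exact CStarAlgebra.nonneg_iff_eq_star_mul_self.mp hF.nonneg
  let V : Fin d → Matrix (Fin d × Fin d) (Fin d) ℂ := fun m =>
    Matrix.of fun x a => if x.1 = a then B m x.2 else 0
  have h : (Matrix.of fun a a' => ∑ i, ∑ j, F i j * ρ (a, i) (a', j) :
      Matrix (Fin d) (Fin d) ℂ) = ∑ m, (V m)ᴴ * ρ * V m := by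
    ext a a'
    simp only [Matrix.of_apply, Matrix.sum_apply, Matrix.mul_apply, hB, conjTranspose_apply, V,
      Fintype.sum_prod_type, apply_ite (star : ℂ → ℂ), star_zero, ite_mul, mul_ite, zero_mul,
      mul_zero, Finset.sum_mul, Finset.sum_ite_irrel, Finset.sum_const_zero,
      Finset.sum_ite_eq', Finset.sum_ite_eq, Finset.mem_univ, if_true]
    refine Eq.trans (Finset.sum_congr rfl fun i _ => Finset.sum_comm) ?_
    rw [Finset.sum_comm]
    refine Finset.sum_congr rfl fun m _ => ?_
    rw [Finset.sum_comm]
    exact Finset.sum_congr rfl fun i _ => Finset.sum_congr rfl fun j _ => by ring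
  rw [h]
  exact posSemidef_sum _ fun m _ => hρ.conjTranspose_mul_mul_same (V m)

lemma aux_trace_proj {d : ℕ} (e : Fin d → Fin d → ℂ) (he : ONB d e) (k : Fin d) :
    (proj (e k)).trace = 1 := by
  have := he k k
  simp only [if_true] at this
  rw [← this]
  simp [Matrix.trace, proj, dotProduct, mul_comm]

/-- Assemble a QC state from unnormalised positive blocks. -/
lemma aux_qc {d : ℕ} (hd : 1 ≤ d) (e : Fin d → Fin d → ℂ) (he : ONB d e)
    (σ : Fin d → Matrix (Fin d) (Fin d) ℂ) (hσ : ∀ k, (σ k).PosSemidef)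
    (τ : Matrix (Fin d × Fin d) (Fin d × Fin d) ℂ)
    (hτ : τ = ∑ k, σ k ⊗ₖ proj (e k)) (ht : τ.trace = 1) : IsQC τ := by
  have hq : ∀ k, (((σ k).trace.re : ℝ) : ℂ) = (σ k).trace := fun k =>
    (Complex.eq_re_of_ofReal_le (r := 0) (by simpa using (hσ k).trace_nonneg)).symm
  have hdef : IsState (Matrix.single (⟨0, hd⟩ : Fin d) ⟨0, hd⟩ (1:ℂ)) := by
    constructor
    · have : Matrix.single (⟨0, hd⟩ : Fin d) ⟨0, hd⟩ (1:ℂ)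
          = Matrix.diagonal (Pi.single ⟨0, hd⟩ 1) := by
        rw [Matrix.diagonal_single]
      rw [this]
      apply PosSemidef.diagonal
      rw [Pi.single_nonneg]
      exact zero_le_one
    · simp
  refine ⟨e, fun k => (σ k).trace.re, fun k => if (σ k).trace = 0 then
    Matrix.single (⟨0, hd⟩ : Fin d) ⟨0, hd⟩ (1:ℂ) else ((σ k).trace)⁻¹ • σ k, he, ?_, ?_, ?_, ?_⟩
  · intro k
    have := (hσ k).trace_nonneg
    exact (Complex.le_def.mp this).1
  · have h1 : ∑ k, (σ k).trace = 1 := by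
      rw [← ht, hτ, Matrix.trace_sum]
      refine Finset.sum_congr rfl fun k _ => ?_
      rw [Matrix.trace_kronecker, aux_trace_proj e he, mul_one]
    rw [← Complex.re_sum, h1, Complex.one_re]
  · intro k
    dsimp only
    split_ifs with h
    · exact hdef
    · refine ⟨PosSemidef.smul (hσ k) ?_, ?_⟩
      · rw [inv_nonneg]
        exact (hσ k).trace_nonneg
      · rw [Matrix.trace_smul, smul_eq_mul, inv_mul_cancel₀ h]
  · rw [hτ]
    refine Finset.sum_congr rfl fun k _ => ?_
    rw [hq]
    dsimp only
    split_ifs with h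
    · rw [(hσ k).trace_eq_zero_iff.mp h]
      simp
    · rw [Matrix.smul_kronecker, smul_smul, mul_inv_cancel₀ h, one_smul]

/-- A trace-preserving map's Choi–Jamiołkowski matrix is QC iff the map
sends every bipartite state to a QC state. -/
theorem qc_breaking_iff_choi_qc (d : ℕ) (hd : 1 ≤ d)
    (Λ : Matrix (Fin d) (Fin d) ℂ →ₗ[ℂ] Matrix (Fin d) (Fin d) ℂ)
    (hTP : TracePreserving (⇑Λ)) :
    IsQC (idTensor (⇑Λ) (Pplus d)) ↔
      ∀ ρ : Matrix (Fin d × Fin d) (Fin d × Fin d) ℂ, IsState ρ →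
        IsQC (idTensor (⇑Λ) ρ) := by
  constructor
  · rintro ⟨e, p, r, he, hp, hp1, hr, hC⟩ ρ hρ
    have hd0 : (d : ℂ) ≠ 0 := by
      exact_mod_cast (by omega : d ≠ 0)
    have hE : ∀ i j, Λ (Matrix.single i j 1) =
        ∑ k, ((d : ℂ) * p k * r k i j) • proj (e k) := by
      intro i j
      have hs : (Matrix.of fun b b' => Pplus d (i, b) (j, b')) =
          (d : ℂ)⁻¹ • Matrix.single i j (1:ℂ) := by
        ext b b'
        simp [Pplus, Matrix.single_apply]
      ext b b'
      have h := congrFun (congrFun hC (i, b)) (j, b')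
      simp only [idTensor, Matrix.of_apply] at h
      rw [hs, map_smul] at h
      simp only [Matrix.smul_apply, Matrix.sum_apply, kroneckerMap_apply, smul_eq_mul] at h ⊢
      rw [inv_mul_eq_iff_eq_mul₀ hd0] at h
      rw [h, Finset.mul_sum]
      exact Finset.sum_congr rfl fun k _ => by ring
    have hX : ∀ X : Matrix (Fin d) (Fin d) ℂ, Λ X =
        ∑ k, (∑ i, ∑ j, ((d : ℂ) * p k * r k i j) * X i j) • proj (e k) := by
      intro X
      conv_lhs => rw [Matrix.matrix_eq_sum_single X]
      have : ∀ i j, Matrix.single i j (X i j) = X i j • Matrix.single i j (1:ℂ) := by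
        intro i j; simp
      simp only [this, map_sum, map_smul, hE, Finset.sum_smul, Finset.smul_sum, smul_smul]
      refine Eq.trans (Finset.sum_congr rfl fun i _ => Finset.sum_comm) ?_
      rw [Finset.sum_comm]
      refine Finset.sum_congr rfl fun k _ => Finset.sum_congr rfl fun i _ =>
        Finset.sum_congr rfl fun j _ => ?_
      rw [mul_comm]
    refine aux_qc hd e he (fun k => Matrix.of fun a a' =>
      ∑ i, ∑ j, (((d : ℂ) * p k) • r k) i j * ρ (a, i) (a', j)) ?_ _ ?_ ?_
    · intro k
      refine aux_psd _ (PosSemidef.smul (hr k).1 ?_) ρ hρ.1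
      have : (0:ℝ) ≤ d * p k := mul_nonneg (Nat.cast_nonneg d) (hp k)
      exact_mod_cast this
    · ext ⟨a, b⟩ ⟨a', b'⟩
      simp only [idTensor, Matrix.of_apply]
      rw [hX]
      simp [Matrix.sum_apply, kroneckerMap_apply]
    · rw [← hρ.2]
      simp only [Matrix.trace, Fintype.sum_prod_type, Matrix.diag_apply, idTensor, Matrix.of_apply]
      refine Finset.sum_congr rfl fun a _ => ?_
      have := hTP (Matrix.of fun b b' => ρ (a, b) (a, b'))
      simpa only [Matrix.trace, Matrix.diag_apply, Matrix.of_apply] using this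
  · intro h
    exact h _ (aux_pplus d hd)

end
end

section
/- Let Λ be a trace-preserving linear map on d×d complex matrices, and suppose its Choi–Jamiołkowski matrix is QC: (id⊗Λ)(P₊) = ∑_i p_i σ_i ⊗ |e_i⟩⟨e_i| with {e_i} an orthonormal basis of ℂ^d, σ_i states, and (p_i) a probability distribution. Then ∑_i p_i σ_i = (1/d)·1; consequently the matrices E_i := d·p_i·σ_iᵀ are positive semidefinite and sum to the identity, i.e. they form a POVM. -/
open Matrix Kronecker BigOperators
open scoped ComplexOrder

noncomputable section

/-- If the Choi–Jamiołkowski matrix of a trace-preserving map is QC,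
then `∑ᵢ pᵢ σᵢ = 1/d` and the matrices `Eᵢ := d·pᵢ·σᵢᵀ` form a POVM. -/
theorem povm_from_qc_choi (d : ℕ)
    (Λ : Matrix (Fin d) (Fin d) ℂ →ₗ[ℂ] Matrix (Fin d) (Fin d) ℂ)
    (hTP : TracePreserving (⇑Λ))
    (e : Fin d → Fin d → ℂ) (he : ONB d e)
    (p : Fin d → ℝ) (hp0 : ∀ i, 0 ≤ p i) (hp1 : ∑ i, p i = 1)
    (σ : Fin d → Matrix (Fin d) (Fin d) ℂ) (hσ : ∀ i, IsState (σ i))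
    (hChoi : idTensor (⇑Λ) (Pplus d) = ∑ i, (p i : ℂ) • (σ i ⊗ₖ proj (e i))) :
    (∑ i, (p i : ℂ) • σ i = (d : ℂ)⁻¹ • (1 : Matrix (Fin d) (Fin d) ℂ)) ∧
    (∀ i, ((d : ℂ) • (p i : ℂ) • (σ i)ᵀ).PosSemidef) ∧
    (∑ i, (d : ℂ) • (p i : ℂ) • (σ i)ᵀ = (1 : Matrix (Fin d) (Fin d) ℂ)) := by
  have h1 : ∑ i, (p i : ℂ) • σ i = (d : ℂ)⁻¹ • (1 : Matrix (Fin d) (Fin d) ℂ) := by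
    ext a a'
    have hproj : ∀ i, ∑ b, proj (e i) b b = 1 := by
      intro i
      have h := he i i
      simp only [dotProduct, if_true, Pi.star_apply] at h
      rw [← h]
      exact Finset.sum_congr rfl fun b _ => by simp [proj, mul_comm]
    have hL : ∑ b, idTensor (⇑Λ) (Pplus d) (a, b) (a', b)
        = (d : ℂ)⁻¹ * (1 : Matrix (Fin d) (Fin d) ℂ) a a' := by
      have h := hTP (Matrix.of fun b b' => Pplus d (a, b) (a', b'))
      simp only [Matrix.trace, Matrix.diag] at h
      simp only [idTensor, Matrix.of_apply]
      rw [h]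
      simp only [Pplus, Matrix.of_apply, Matrix.one_apply]
      by_cases haa : a = a'
      · subst haa; simp
      · rw [if_neg haa, mul_zero]
        refine Finset.sum_eq_zero fun b _ => if_neg ?_
        rintro ⟨h1, h2⟩
        exact haa (h1.trans h2.symm)
    rw [Matrix.smul_apply, smul_eq_mul, ← hL, hChoi]
    simp only [Matrix.sum_apply, Matrix.smul_apply, Matrix.kroneckerMap_apply, smul_eq_mul]
    rw [Finset.sum_comm]
    refine Finset.sum_congr rfl fun i _ => ?_
    rw [← Finset.mul_sum, ← Finset.mul_sum, hproj, mul_one]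
  have hd : (d : ℂ) ≠ 0 := by
    rintro h
    have h0 : d = 0 := by exact_mod_cast h
    subst h0
    simp at hp1
  refine ⟨h1, fun i => ?_, ?_⟩
  · refine Matrix.PosSemidef.smul (Matrix.PosSemidef.smul (hσ i).1.transpose ?_) ?_
    · exact_mod_cast hp0 i
    · exact_mod_cast Nat.zero_le d
  · have h2 := congrArg (fun M => (d : ℂ) • Mᵀ) h1
    simpa [Matrix.transpose_sum, Finset.smul_sum, smul_smul, hd] using h2

end
end

section
/- Let Λ be a linear map on d×d complex matrices whose Choi–Jamiołkowski matrix is QC: (id⊗Λ)(P₊) = ∑_i p_i σ_i ⊗ |e_i⟩⟨e_i| with {e_i} an orthonormal basis of ℂ^d, σ_i states, and (p_i) a probability distribution. Then Λ is a measurement map: for every d×d matrix ρ, Λ(ρ) = ∑_i Tr(ρ E_i) |e_i⟩⟨e_i|, where E_i := d·p_i·σ_iᵀ and the transpose is taken in the standard basis. -/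
open Matrix Kronecker BigOperators
open scoped ComplexOrder

noncomputable section

/-- A map whose Choi–Jamiołkowski matrix is QC is a measurement map:
`Λ(ρ) = ∑ᵢ Tr(ρ Eᵢ) |eᵢ⟩⟨eᵢ|` with `Eᵢ := d·pᵢ·σᵢᵀ`. -/
theorem qc_choi_implies_measurement_map (d : ℕ)
    (Λ : Matrix (Fin d) (Fin d) ℂ →ₗ[ℂ] Matrix (Fin d) (Fin d) ℂ)
    (e : Fin d → Fin d → ℂ) (he : ONB d e)
    (p : Fin d → ℝ) (hp0 : ∀ i, 0 ≤ p i) (hp1 : ∑ i, p i = 1)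
    (σ : Fin d → Matrix (Fin d) (Fin d) ℂ) (hσ : ∀ i, IsState (σ i))
    (hChoi : idTensor (⇑Λ) (Pplus d) = ∑ i, (p i : ℂ) • (σ i ⊗ₖ proj (e i))) :
    ∀ ρ : Matrix (Fin d) (Fin d) ℂ,
      Λ ρ = ∑ i, (ρ * ((d : ℂ) • (p i : ℂ) • (σ i)ᵀ)).trace • proj (e i) := by
  intro ρ
  have hd : (d : ℂ) ≠ 0 := by
    rintro h
    have h0 : d = 0 := by exact_mod_cast h
    subst h0
    simp at hp1
  have key : ∀ a b, Λ (Matrix.single a b 1)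
      = ∑ i, ((d : ℂ) * (p i : ℂ) * σ i a b) • proj (e i) := by
    intro a b
    have h1 : (Matrix.of fun x y => Pplus d (a, x) (b, y))
        = (d : ℂ)⁻¹ • Matrix.single a b (1 : ℂ) := by
      ext x y
      simp [Pplus, Matrix.single_apply]
    ext x y
    have h2 := congrFun (congrFun hChoi (a, x)) (b, y)
    have h3 : idTensor (⇑Λ) (Pplus d) (a, x) (b, y)
        = (d : ℂ)⁻¹ * Λ (Matrix.single a b 1) x y := by
      change Λ (Matrix.of fun x y => Pplus d (a, x) (b, y)) x y = _
      rw [h1, map_smul]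
      rfl
    rw [h3, inv_mul_eq_iff_eq_mul₀ hd] at h2
    rw [h2]
    simp only [Matrix.sum_apply, Matrix.smul_apply, Matrix.kroneckerMap_apply, smul_eq_mul,
      Finset.mul_sum]
    refine Finset.sum_congr rfl fun i _ => ?_
    ring
  have hρ : ρ = ∑ a, ∑ b, ρ a b • Matrix.single a b (1 : ℂ) := by
    conv_lhs => rw [Matrix.matrix_eq_sum_single ρ]
    simp
  have ht : ∀ i, (ρ * ((d : ℂ) • (p i : ℂ) • (σ i)ᵀ)).trace
      = ∑ a, ∑ b, ρ a b * ((d : ℂ) * (p i : ℂ) * σ i a b) := by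
    intro i
    simp only [Matrix.trace, Matrix.diag, Matrix.mul_apply, Matrix.smul_apply,
      Matrix.transpose_apply, smul_eq_mul, mul_assoc]
  simp only [ht]
  conv_lhs => rw [hρ]
  simp only [map_sum, map_smul, key, Finset.smul_sum, Finset.sum_smul, smul_smul]
  rw [Finset.sum_comm (γ := Fin d)]
  conv_rhs => rw [Finset.sum_comm]
  rw [Finset.sum_comm]
  refine Finset.sum_congr rfl fun a _ => ?_
  rw [Finset.sum_comm]

end
end

section
/- Let Λ be a trace-preserving linear map on d×d complex matrices whose Choi–Jamiołkowski matrix is CC: (id⊗Λ)(P₊) = ∑_{i,j} p_{ij} |e_i⟩⟨e_i| ⊗ |f_j⟩⟨f_j| with {e_i}, {f_j} orthonormal bases of ℂ^d and (p_{ij}) a joint probability distribution. Define E_j := d ∑_i p_{ij} |e_i*⟩⟨e_i*|, where e_i* is the entrywise complex conjugate of e_i in the standard basis. Then: (1) Λ(ρ) = ∑_j Tr(ρ E_j) |f_j⟩⟨f_j| for every ρ; (2) the E_j are positive semidefinite and sum to the identity (a POVM); and (3) the E_j pairwise commute: E_j E_{j'} = E_{j'} E_j for all j, j'. -/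
open Matrix Kronecker BigOperators
open scoped ComplexOrder

noncomputable section

/-- The POVM element `E_j := d ∑ᵢ p_{ij} |eᵢ*⟩⟨eᵢ*|` built from a CC Choi matrix. -/
def Ecc (d : ℕ) (e : Fin d → Fin d → ℂ) (p : Fin d → Fin d → ℝ) (j : Fin d) :
    Matrix (Fin d) (Fin d) ℂ :=
  (d : ℂ) • ∑ i, (p i j : ℂ) • proj (fun k => star (e i k))

theorem proj_mul_aux {d : ℕ} (u v : Fin d → ℂ) :
    proj u * proj v = (star u ⬝ᵥ v) • Matrix.of fun a b => u a * star (v b) := by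
  ext a b
  simp only [proj, Matrix.mul_apply, Matrix.of_apply, Matrix.smul_apply, dotProduct,
    Pi.star_apply, smul_eq_mul, Finset.sum_mul]
  exact Finset.sum_congr rfl fun k _ => by ring

theorem proj_commute_aux {d : ℕ} (e : Fin d → Fin d → ℂ) (he : ONB d e) (i k : Fin d) :
    Commute (proj (fun a => star (e i a))) (proj (fun a => star (e k a))) := by
  by_cases h : i = k
  · subst h; exact Commute.refl _
  · have key : ∀ i k : Fin d, i ≠ k →
        proj (fun a => star (e i a)) * proj (fun a => star (e k a)) = 0 := by
      intro i k h
      rw [proj_mul_aux]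
      have h1 : star (fun a => star (e i a)) ⬝ᵥ (fun a => star (e k a)) = 0 := by
        have h2 := he k i
        rw [if_neg (Ne.symm h)] at h2
        rw [← h2]
        simp only [dotProduct, Pi.star_apply, star_star]
        exact Finset.sum_congr rfl fun k _ => by ring
      rw [h1, zero_smul]
    rw [Commute, SemiconjBy, key i k h, key k i (Ne.symm h)]

theorem proj_psd_aux {d : ℕ} (v : Fin d → ℂ) : (proj v).PosSemidef :=
  Matrix.posSemidef_vecMulVec_self_star v

theorem proj_trace_aux {d : ℕ} (v : Fin d → ℂ) : (proj v).trace = star v ⬝ᵥ v := by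
  simp only [proj, Matrix.trace, Matrix.diag, Matrix.of_apply, dotProduct, Pi.star_apply]
  exact Finset.sum_congr rfl fun k _ => by ring

/-- If the Choi–Jamiołkowski matrix of a trace-preserving map is CC, then the map
is a measurement map for the pairwise commuting POVM `E_j = d ∑ᵢ p_{ij} |eᵢ*⟩⟨eᵢ*|`. -/
theorem cc_choi_measurement_commuting_povm (d : ℕ)
    (Λ : Matrix (Fin d) (Fin d) ℂ →ₗ[ℂ] Matrix (Fin d) (Fin d) ℂ)
    (hTP : TracePreserving (⇑Λ))
    (e : Fin d → Fin d → ℂ) (he : ONB d e)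
    (f : Fin d → Fin d → ℂ) (hf : ONB d f)
    (p : Fin d → Fin d → ℝ) (hp0 : ∀ i j, 0 ≤ p i j) (hp1 : ∑ i, ∑ j, p i j = 1)
    (hChoi : idTensor (⇑Λ) (Pplus d)
      = ∑ i, ∑ j, (p i j : ℂ) • (proj (e i) ⊗ₖ proj (f j))) :
    (∀ ρ : Matrix (Fin d) (Fin d) ℂ,
        Λ ρ = ∑ j, (ρ * Ecc d e p j).trace • proj (f j)) ∧
    (∀ j, (Ecc d e p j).PosSemidef) ∧
    (∑ j, Ecc d e p j = (1 : Matrix (Fin d) (Fin d) ℂ)) ∧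
    (∀ j j', Ecc d e p j * Ecc d e p j' = Ecc d e p j' * Ecc d e p j) := by
  have hd : (d : ℂ) ≠ 0 := by
    rintro h
    have h0 : d = 0 := by exact_mod_cast h
    subst h0
    simp at hp1
  have hs : ∀ a a' : Fin d, Λ (Matrix.single a a' 1)
      = ∑ j, (Ecc d e p j a' a) • proj (f j) := by
    intro a a'
    ext b b'
    have h := congrFun (congrFun hChoi (a, b)) (a', b')
    have h1 : (Matrix.of fun c c' => Pplus d (a, c) (a', c'))
        = (d : ℂ)⁻¹ • Matrix.single a a' (1 : ℂ) := by
      ext c c'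
      simp [Pplus, Matrix.single_apply]
    simp only [idTensor, Matrix.of_apply] at h
    rw [h1, map_smul, Matrix.smul_apply, smul_eq_mul, inv_mul_eq_iff_eq_mul₀ hd] at h
    rw [h, Finset.sum_comm]
    simp only [Matrix.sum_apply, Matrix.smul_apply, Matrix.kroneckerMap_apply, smul_eq_mul, Ecc,
      Finset.mul_sum, Finset.sum_mul]
    refine Finset.sum_congr rfl fun j _ => Finset.sum_congr rfl fun i _ => ?_
    simp only [proj, Matrix.of_apply, star_star]
    ring
  have h1 : ∀ ρ : Matrix (Fin d) (Fin d) ℂ,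
      Λ ρ = ∑ j, (ρ * Ecc d e p j).trace • proj (f j) := by
    intro ρ
    conv_lhs => rw [Matrix.matrix_eq_sum_single ρ]
    have h2 : ∀ a a', Matrix.single a a' (ρ a a') = ρ a a' • Matrix.single a a' (1 : ℂ) := by
      intro a a'; simp
    simp only [h2, map_sum, map_smul, hs, Matrix.trace, Matrix.diag, Matrix.mul_apply,
      Finset.sum_smul, Finset.smul_sum, smul_smul]
    rw [Finset.sum_comm (s := (Finset.univ : Finset (Fin d)))
      (f := fun j a => ∑ a', (ρ a a' * Ecc d e p j a' a) • proj (f j))]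
    exact Finset.sum_congr rfl fun a _ => Finset.sum_comm
  refine ⟨h1, ?_, ?_, ?_⟩
  · intro j
    refine Matrix.PosSemidef.smul (Matrix.posSemidef_sum _ fun i _ =>
      (proj_psd_aux _).smul ?_) ?_
    · exact_mod_cast hp0 i j
    · exact_mod_cast Nat.zero_le d
  · refine Matrix.ext_iff_trace_mul_left.mpr fun ρ => ?_
    have h2 := hTP ρ
    rw [h1 ρ, Matrix.trace_sum] at h2
    simp only [Matrix.trace_smul, proj_trace_aux, hf _ _, if_true, smul_eq_mul, mul_one] at h2
    rw [Finset.mul_sum, Matrix.trace_sum, h2, mul_one]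
  · intro j j'
    have : Commute (Ecc d e p j) (Ecc d e p j') := by
      unfold Ecc
      refine Commute.smul_left (Commute.smul_right ?_ _) _
      refine Commute.sum_left _ _ _ fun i _ => Commute.sum_right _ _ _ fun k _ => ?_
      exact Commute.smul_left (Commute.smul_right (proj_commute_aux e he i k) _) _
    exact this

end
end

section
/- Let σ = ∑_j q_j ρ_j ⊗ |f_j⟩⟨f_j| be a QC state on ℂ^{d_A} ⊗ ℂ^{d_B}, where {f_j} is an orthonormal basis of ℂ^{d_B}, each ρ_j is a state on ℂ^{d_A}, and (q_j) is a probability distribution with all q_j > 0. Then σ is a CC state if and only if the residual states pairwise commute: ρ_j ρ_{j'} = ρ_{j'} ρ_j for all j, j'. -/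
open Matrix Kronecker BigOperators
open scoped ComplexOrder

noncomputable section

/-- Compression of the second factor onto the vector `v`. -/
def cmpB {dA dB : ℕ} (v : Fin dB → ℂ) :
    Matrix (Fin dA × Fin dB) (Fin dA × Fin dB) ℂ →ₗ[ℂ] Matrix (Fin dA) (Fin dA) ℂ where
  toFun M := Matrix.of fun a a' => ∑ b, ∑ b', star (v b) * M (a, b) (a', b') * v b'
  map_add' M N := by
    ext a a'
    simp [mul_add, add_mul, Finset.sum_add_distrib]
  map_smul' c M := by
    ext a a'
    simp only [Matrix.of_apply, Matrix.smul_apply, smul_eq_mul, Finset.mul_sum, RingHom.id_apply]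
    refine Finset.sum_congr rfl fun _ _ => Finset.sum_congr rfl fun _ _ => by ring

lemma cmpB_kron {dA dB : ℕ} (v w : Fin dB → ℂ) (X : Matrix (Fin dA) (Fin dA) ℂ) :
    cmpB v (X ⊗ₖ proj w) = ((star v ⬝ᵥ w) * (star w ⬝ᵥ v)) • X := by
  ext a a'
  simp only [cmpB, LinearMap.coe_mk, AddHom.coe_mk, Matrix.of_apply, Matrix.smul_apply,
    smul_eq_mul, Matrix.kroneckerMap_apply, proj, dotProduct, Finset.sum_mul, Finset.mul_sum,
    Pi.star_apply]
  rw [Finset.sum_comm]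
  refine Finset.sum_congr rfl fun _ _ => Finset.sum_congr rfl fun _ _ => by ring

lemma proj_eq {n : Type*} (v : n → ℂ) : proj v = Matrix.vecMulVec v (star v) := by
  ext a b; simp [proj, Matrix.vecMulVec_apply]

lemma proj_commute {d : ℕ} {e : Fin d → Fin d → ℂ} (he : ONB d e) (i j : Fin d) :
    Commute (proj (e i)) (proj (e j)) := by
  by_cases h : i = j
  · subst h; exact Commute.refl _
  · have h1 := he i j
    have h2 := he j i
    rw [if_neg h] at h1
    rw [if_neg (Ne.symm h)] at h2
    simp [Commute, SemiconjBy, proj_eq, Matrix.vecMulVec_mul_vecMulVec, h1, h2]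

lemma sum_proj {d : ℕ} {e : Fin d → Fin d → ℂ} (he : ONB d e) : ∑ i, proj (e i) = 1 := by
  have h : (Matrix.of fun a i => e i a)ᴴ * (Matrix.of fun a i => e i a) = 1 := by
    ext i j
    have := he i j
    simpa [Matrix.mul_apply, Matrix.one_apply, dotProduct] using this
  rw [mul_eq_one_comm] at h
  rw [← h]
  ext a b
  simp [Matrix.mul_apply, proj, Matrix.sum_apply]

lemma exists_joint {dA : ℕ} {ι : Type*} (ρ : ι → Matrix (Fin dA) (Fin dA) ℂ)
    (hρ : ∀ j, (ρ j).IsHermitian) (hc : ∀ j j', ρ j * ρ j' = ρ j' * ρ j) :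
    ∃ (e : Fin dA → Fin dA → ℂ) (c : ι → Fin dA → ℂ), ONB dA e ∧
      ∀ j i, ρ j *ᵥ e i = c j i • e i := by
  classical
  let T : ι → EuclideanSpace ℂ (Fin dA) →ₗ[ℂ] EuclideanSpace ℂ (Fin dA) :=
    fun j => (ρ j).toEuclideanLin
  have hT : ∀ j, (T j).IsSymmetric := fun j => Matrix.isSymmetric_toEuclideanLin_iff.2 (hρ j)
  have hC : Pairwise (Function.onFun Commute T) := by
    intro j j' _
    show T j * T j' = T j' * T j
    ext1 x
    simp [T, Matrix.toEuclideanLin_apply, Matrix.mulVec_mulVec, hc j j']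
  have hV := LinearMap.IsSymmetric.orthogonalFamily_iInf_eigenspaces hT
  have hI : DirectSum.IsInternal
      (fun α : ι → ℂ ↦ ⨅ j, Module.End.eigenspace (T j) (α j)) := by
    rw [OrthogonalFamily.isInternal_iff]
    · rw [LinearMap.IsSymmetric.iSup_iInf_eq_top_of_commute hT hC,
        Submodule.top_orthogonal_eq_bot]
    · exact hV
  have hI' := DirectSum.isInternal_ne_bot_iff.2 hI
  letI := hI.submodule_iSupIndep.fintypeNeBotOfFiniteDimensional
  have hV' := hV.comp (Subtype.val_injective
    (p := fun α : ι → ℂ => (⨅ j, Module.End.eigenspace (T j) (α j)) ≠ ⊥))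
  have hn : Module.finrank ℂ (EuclideanSpace ℂ (Fin dA)) = dA := by simp
  let b := hI'.subordinateOrthonormalBasis hn hV'
  refine ⟨fun i => (b i).ofLp,
    fun j i => (hI'.subordinateOrthonormalBasisIndex hn i hV').1 j, ?_, ?_⟩
  · intro i j
    have := orthonormal_iff_ite.1 b.orthonormal i j
    rw [EuclideanSpace.inner_eq_star_dotProduct, dotProduct_comm] at this
    exact this
  · intro j i
    have h := hI'.subordinateOrthonormalBasis_subordinate hn i hV'
    have h2 := Module.End.mem_eigenspace_iff.1 ((Submodule.mem_iInf _).1 h j)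
    exact congrArg WithLp.ofLp h2

/-- A QC state (with strictly positive weights) is CC iff its residual states
pairwise commute. -/
theorem qc_state_cc_iff_residuals_commute (dA dB : ℕ)
    (f : Fin dB → Fin dB → ℂ) (hf : ONB dB f)
    (q : Fin dB → ℝ) (hq : ∀ j, 0 < q j) (hq1 : ∑ j, q j = 1)
    (ρ : Fin dB → Matrix (Fin dA) (Fin dA) ℂ) (hρ : ∀ j, IsState (ρ j))
    (σ : Matrix (Fin dA × Fin dB) (Fin dA × Fin dB) ℂ)
    (hσ : σ = ∑ j, (q j : ℂ) • (ρ j ⊗ₖ proj (f j))) :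
    IsCC σ ↔ ∀ j j', ρ j * ρ j' = ρ j' * ρ j := by
  constructor
  · rintro ⟨e, g, p, he, hg, hp, hp1, h⟩
    have key : ∀ j, ∃ c : Fin dA → ℂ, ρ j = ∑ i, c i • proj (e i) := by
      intro j
      have h1 : cmpB (f j) σ = (q j : ℂ) • ρ j := by
        rw [hσ, map_sum, Finset.sum_eq_single j]
        · have := hf j j
          rw [if_pos rfl] at this
          rw [map_smul, cmpB_kron, this]; simp
        · intro k _ hk
          have := hf k j
          rw [if_neg hk] at this
          rw [map_smul, cmpB_kron, this]; simp
        · simp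
      have hq0 : (q j : ℂ) ≠ 0 := by exact_mod_cast (hq j).ne'
      refine ⟨fun i => (q j : ℂ)⁻¹ *
        ∑ k, (p i k : ℂ) * ((star (f j) ⬝ᵥ g k) * (star (g k) ⬝ᵥ f j)), ?_⟩
      have h2 : ρ j = (q j : ℂ)⁻¹ • cmpB (f j) σ := by
        rw [h1, smul_smul, inv_mul_cancel₀ hq0, one_smul]
      rw [h2, h]
      simp only [map_sum, map_smul, cmpB_kron, smul_smul, Finset.smul_sum, Finset.mul_sum,
        Finset.sum_smul]
    choose c hc using key
    intro j j'
    have : Commute (ρ j) (ρ j') := by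
      rw [hc j, hc j']
      refine Commute.sum_left _ _ _ fun i _ => Commute.sum_right _ _ _ fun k _ => ?_
      exact ((proj_commute he i k).smul_left _).smul_right _
    exact this
  · intro hc
    obtain ⟨e, c, he, hev⟩ := exists_joint ρ (fun j => (hρ j).1.1) hc
    have hc0 : ∀ j i, 0 ≤ c j i := by
      intro j i
      have h1 := (hρ j).1.dotProduct_mulVec_nonneg (e i)
      have h2 := he i i
      rw [if_pos rfl] at h2
      rwa [hev, dotProduct_smul, h2, smul_eq_mul, mul_one] at h1
    have hcr : ∀ j i, ((c j i).re : ℂ) = c j i := fun j i =>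
      Complex.ext rfl (Complex.nonneg_iff.1 (hc0 j i)).2
    have hdec : ∀ j, ρ j = ∑ i, c j i • proj (e i) := by
      intro j
      rw [← mul_one (ρ j), ← sum_proj he, Finset.mul_sum]
      refine Finset.sum_congr rfl fun i _ => ?_
      rw [proj_eq, Matrix.mul_vecMulVec, hev, Matrix.smul_vecMulVec]
    have htr : ∀ j, ∑ i, (c j i).re = 1 := by
      intro j
      have h1 := (hρ j).2
      rw [hdec j, Matrix.trace_sum] at h1
      have h2 : ∀ i, (c j i • proj (e i)).trace = c j i := by
        intro i
        have h2 := he i i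
        rw [if_pos rfl] at h2
        rw [Matrix.trace_smul, proj_eq, Matrix.trace_vecMulVec, dotProduct_comm, h2]
        simp
      simp only [h2] at h1
      simpa using congrArg Complex.re h1
    refine ⟨e, f, fun i j => q j * (c j i).re, he, hf, ?_, ?_, ?_⟩
    · exact fun i j => mul_nonneg (hq j).le (Complex.nonneg_iff.1 (hc0 j i)).1
    · rw [Finset.sum_comm]
      simp only [← Finset.mul_sum, htr, mul_one, hq1]
    · rw [hσ, Finset.sum_comm]
      refine Finset.sum_congr rfl fun j _ => ?_
      simp only [Complex.ofReal_mul, hcr]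
      ext ⟨a, b⟩ ⟨a', b'⟩
      rw [hdec j]
      simp only [Matrix.smul_apply, Matrix.kroneckerMap_apply, Matrix.sum_apply, smul_eq_mul,
        Finset.sum_mul, Finset.mul_sum]
      exact Finset.sum_congr rfl fun i _ => by ring

end
end

section
/- Let Λ_A and Λ_B be linear maps on d_A×d_A and d_B×d_B complex matrices, respectively, such that (Λ_A⊗id)(P₊^{(d_A)}) = ∑_i p_i^A |e_i⟩⟨e_i| ⊗ σ_i^B is a CQ state and (id⊗Λ_B)(P₊^{(d_B)}) = ∑_j p_j^B σ_j^A ⊗ |f_j⟩⟨f_j| is a QC state (with {e_i}, {f_j} orthonormal bases and σ_i^B, σ_j^A states). Set E_i^A := d_A p_i^A (σ_i^B)ᵀ and E_j^B := d_B p_j^B (σ_j^A)ᵀ. Then for every bipartite state ρ_AB on ℂ^{d_A} ⊗ ℂ^{d_B}, (Λ_A⊗Λ_B)(ρ_AB) = ∑_{i,j} Tr( ρ_AB · (E_i^A ⊗ E_j^B) ) |e_i⟩⟨e_i| ⊗ |f_j⟩⟨f_j|, which is a CC state. -/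
open Matrix Kronecker BigOperators
open scoped ComplexOrder

noncomputable section

/-- `Λ_A ⊗ Λ_B`, realized as `(Λ_A ⊗ id) ∘ (id ⊗ Λ_B)`; for linear maps this is the
unique linear map with `(Λ_A ⊗ Λ_B)(A ⊗ B) = Λ_A(A) ⊗ Λ_B(B)`. -/
def tensorMap {dA dB : ℕ}
    (ΛA : Matrix (Fin dA) (Fin dA) ℂ → Matrix (Fin dA) (Fin dA) ℂ)
    (ΛB : Matrix (Fin dB) (Fin dB) ℂ → Matrix (Fin dB) (Fin dB) ℂ)
    (M : Matrix (Fin dA × Fin dB) (Fin dA × Fin dB) ℂ) :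
    Matrix (Fin dA × Fin dB) (Fin dA × Fin dB) ℂ :=
  tensorId ΛA (idTensor ΛB M)

lemma choi_apply {d : ℕ} (Λ : Matrix (Fin d) (Fin d) ℂ →ₗ[ℂ] Matrix (Fin d) (Fin d) ℂ)
    (p : Fin d → ℂ) (P σ : Fin d → Matrix (Fin d) (Fin d) ℂ)
    (h : ∀ c c' a a', Λ (Matrix.single c c' (d : ℂ)⁻¹) a a' = ∑ i, p i * (P i a a' * σ i c c'))
    (X : Matrix (Fin d) (Fin d) ℂ) :
    Λ X = ∑ i, ((d : ℂ) * p i * ∑ c, ∑ c', X c c' * σ i c c') • P i := by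
  ext a a'
  have hd : (d : ℂ) ≠ 0 := by
    have := a.pos
    exact_mod_cast this.ne'
  have hX : Λ X = ∑ c, ∑ c', ((d : ℂ) * X c c') • Λ (Matrix.single c c' (d : ℂ)⁻¹) := by
    conv_lhs => rw [matrix_eq_sum_single X]
    rw [map_sum]
    refine Finset.sum_congr rfl fun c _ => ?_
    rw [map_sum]
    refine Finset.sum_congr rfl fun c' _ => ?_
    rw [← map_smul, Matrix.smul_single]
    congr 2
    simp only [smul_eq_mul]
    field_simp
  rw [hX]
  simp only [Matrix.sum_apply, Matrix.smul_apply, smul_eq_mul, h, Finset.mul_sum, Finset.sum_mul]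
  rw [Finset.sum_comm_cycle]
  refine Finset.sum_congr rfl fun i _ => ?_
  refine Finset.sum_congr rfl fun c _ => ?_
  refine Finset.sum_congr rfl fun c' _ => ?_
  ring

lemma trace_mul_nonneg_aux {n : Type*} [Fintype n] [DecidableEq n] {A B : Matrix n n ℂ}
    (hA : A.PosSemidef) (hB : B.PosSemidef) : 0 ≤ (A * B).trace := by
  obtain ⟨m, v, rfl⟩ := Matrix.posSemidef_iff_eq_sum_vecMulVec.mp hB
  rw [Matrix.mul_sum, Matrix.trace_sum]
  refine Finset.sum_nonneg fun i _ => ?_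
  rw [Matrix.mul_vecMulVec, Matrix.trace_vecMulVec, dotProduct_comm]
  exact hA.dotProduct_mulVec_nonneg _

lemma trace_proj {d : ℕ} {e : Fin d → Fin d → ℂ} (he : ONB d e) (i : Fin d) :
    (proj (e i)).trace = 1 := by
  have := he i i
  simp only [dotProduct, if_true] at this
  rw [← this]
  simp [Matrix.trace, proj, mul_comm]

lemma trace_tensorMap {dA dB : ℕ}
    (ΛA : Matrix (Fin dA) (Fin dA) ℂ → Matrix (Fin dA) (Fin dA) ℂ)
    (ΛB : Matrix (Fin dB) (Fin dB) ℂ → Matrix (Fin dB) (Fin dB) ℂ)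
    (hA : TracePreserving ΛA) (hB : TracePreserving ΛB)
    (M : Matrix (Fin dA × Fin dB) (Fin dA × Fin dB) ℂ) :
    (tensorMap ΛA ΛB M).trace = M.trace := by
  have h1 : ∀ N : Matrix (Fin dA × Fin dB) (Fin dA × Fin dB) ℂ,
      (tensorId ΛA N).trace = N.trace := by
    intro N
    simp only [Matrix.trace, Matrix.diag, Fintype.sum_prod_type_right, tensorId, Matrix.of_apply]
    refine Finset.sum_congr rfl fun b _ => ?_
    exact hA (Matrix.of fun a a' => N (a, b) (a', b))
  have h2 : ∀ N : Matrix (Fin dA × Fin dB) (Fin dA × Fin dB) ℂ,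
      (idTensor ΛB N).trace = N.trace := by
    intro N
    simp only [Matrix.trace, Matrix.diag, Fintype.sum_prod_type, idTensor, Matrix.of_apply]
    refine Finset.sum_congr rfl fun a _ => ?_
    exact hB (Matrix.of fun b b' => N (a, b) (a, b'))
  rw [tensorMap, h1, h2]

/-- If the Choi matrix of `Λ_A ⊗ id` is CQ and that of `id ⊗ Λ_B` is QC
(for trace-preserving `Λ_A`, `Λ_B`), then `Λ_A ⊗ Λ_B` maps every bipartite state
to the CC state `∑_{i,j} Tr(ρ_AB (E_i^A ⊗ E_j^B)) |e_i⟩⟨e_i| ⊗ |f_j⟩⟨f_j|`. -/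
theorem cq_qc_choi_product_channel_gives_cc (dA dB : ℕ)
    (ΛA : Matrix (Fin dA) (Fin dA) ℂ →ₗ[ℂ] Matrix (Fin dA) (Fin dA) ℂ)
    (ΛB : Matrix (Fin dB) (Fin dB) ℂ →ₗ[ℂ] Matrix (Fin dB) (Fin dB) ℂ)
    (hTPA : TracePreserving (⇑ΛA)) (hTPB : TracePreserving (⇑ΛB))
    (e : Fin dA → Fin dA → ℂ) (he : ONB dA e)
    (f : Fin dB → Fin dB → ℂ) (hf : ONB dB f)
    (pA : Fin dA → ℝ) (hpA0 : ∀ i, 0 ≤ pA i) (hpA1 : ∑ i, pA i = 1)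
    (σB : Fin dA → Matrix (Fin dA) (Fin dA) ℂ) (hσB : ∀ i, IsState (σB i))
    (pB : Fin dB → ℝ) (hpB0 : ∀ j, 0 ≤ pB j) (hpB1 : ∑ j, pB j = 1)
    (σA : Fin dB → Matrix (Fin dB) (Fin dB) ℂ) (hσA : ∀ j, IsState (σA j))
    (hChoiA : tensorId (⇑ΛA) (Pplus dA)
      = ∑ i, (pA i : ℂ) • (proj (e i) ⊗ₖ σB i))
    (hChoiB : idTensor (⇑ΛB) (Pplus dB)
      = ∑ j, (pB j : ℂ) • (σA j ⊗ₖ proj (f j))) :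
    ∀ ρAB : Matrix (Fin dA × Fin dB) (Fin dA × Fin dB) ℂ, IsState ρAB →
      (tensorMap (⇑ΛA) (⇑ΛB) ρAB
        = ∑ i, ∑ j,
            ((ρAB * (((dA : ℂ) • (pA i : ℂ) • (σB i)ᵀ) ⊗ₖ
                ((dB : ℂ) • (pB j : ℂ) • (σA j)ᵀ))).trace)
              • (proj (e i) ⊗ₖ proj (f j))) ∧
      IsCC (tensorMap (⇑ΛA) (⇑ΛB) ρAB) := by
  intro ρ hρ
  have hA := choi_apply ΛA (fun i => (pA i : ℂ)) (fun i => proj (e i)) σB (by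
    intro c c' a a'
    have := congrFun (congrFun hChoiA (a, c)) (a', c')
    simp only [Matrix.sum_apply, Matrix.smul_apply, Matrix.kroneckerMap_apply, smul_eq_mul] at this
    rw [← this]
    simp only [tensorId, Matrix.of_apply]
    have hm : Matrix.single c c' (dA : ℂ)⁻¹
        = Matrix.of fun x y => if x = c ∧ y = c' then (dA : ℂ)⁻¹ else 0 := by
      ext x y
      simp [Matrix.single_apply, eq_comm]
    rw [hm]
    rfl)
  have hB := choi_apply ΛB (fun i => (pB i : ℂ)) (fun i => proj (f i)) σA (by
    intro c c' a a'
    have := congrFun (congrFun hChoiB (c, a)) (c', a')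
    simp only [Matrix.sum_apply, Matrix.smul_apply, Matrix.kroneckerMap_apply, smul_eq_mul] at this
    simp only [mul_comm (proj _ _ _)]
    rw [← this]
    simp only [idTensor, Matrix.of_apply]
    congr 2)
  have key : tensorMap (⇑ΛA) (⇑ΛB) ρ
        = ∑ i, ∑ j,
            ((ρ * (((dA : ℂ) • (pA i : ℂ) • (σB i)ᵀ) ⊗ₖ
                ((dB : ℂ) • (pB j : ℂ) • (σA j)ᵀ))).trace)
              • (proj (e i) ⊗ₖ proj (f j)) := by
    ext ⟨a, b⟩ ⟨a', b'⟩
    simp only [tensorMap, tensorId, idTensor, Matrix.of_apply, hA, hB]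
    simp only [Matrix.sum_apply, Matrix.smul_apply, Matrix.kroneckerMap_apply, smul_eq_mul,
      Matrix.trace, Matrix.diag, Matrix.mul_apply, Matrix.of_apply, Matrix.transpose_apply]
    refine Finset.sum_congr rfl fun i _ => ?_
    have hS : ∀ j, ∑ x : Fin dA × Fin dB, ∑ y : Fin dA × Fin dB,
        ρ x y * ((dA : ℂ) * ((pA i : ℂ) * σB i x.1 y.1) * ((dB : ℂ) * ((pB j : ℂ) * σA j x.2 y.2)))
        = (dA : ℂ) * pA i * ∑ c, ∑ c', ((dB : ℂ) * pB j *
            ∑ k, ∑ k', ρ (c, k) (c', k') * σA j k k') * σB i c c' := by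
      intro j
      simp only [Fintype.sum_prod_type, Finset.mul_sum, Finset.sum_mul]
      refine Finset.sum_congr rfl fun c _ => ?_
      rw [Finset.sum_comm]
      refine Finset.sum_congr rfl fun c' _ => ?_
      refine Finset.sum_congr rfl fun k _ => ?_
      refine Finset.sum_congr rfl fun k' _ => ?_
      ring
    simp only [hS]
    have hT : ∀ g : Fin dA → Fin dA → Fin dB → ℂ,
        (dA : ℂ) * pA i * (∑ c, ∑ c', (∑ j, g c c' j * proj (f j) b b') * σB i c c')
          * proj (e i) a a'
        = ∑ j, (dA : ℂ) * pA i * (∑ c, ∑ c', g c c' j * σB i c c')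
          * (proj (e i) a a' * proj (f j) b b') := by
      intro g
      simp only [Finset.mul_sum, Finset.sum_mul]
      rw [Finset.sum_comm_cycle]
      refine Finset.sum_congr rfl fun j _ => ?_
      refine Finset.sum_congr rfl fun c _ => ?_
      refine Finset.sum_congr rfl fun c' _ => ?_
      ring
    exact hT _
  refine ⟨key, ?_⟩
  have hpos : ∀ i j, 0 ≤ (ρ * (((dA : ℂ) • (pA i : ℂ) • (σB i)ᵀ) ⊗ₖ
                ((dB : ℂ) • (pB j : ℂ) • (σA j)ᵀ))).trace := by
    intro i j
    refine trace_mul_nonneg_aux hρ.1 (Matrix.PosSemidef.kronecker ?_ ?_)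
    · exact (((hσB i).1.transpose).smul (by exact_mod_cast hpA0 i)).smul (by positivity)
    · exact (((hσA j).1.transpose).smul (by exact_mod_cast hpB0 j)).smul (by positivity)
  have hre : ∀ i j, (((ρ * (((dA : ℂ) • (pA i : ℂ) • (σB i)ᵀ) ⊗ₖ
                ((dB : ℂ) • (pB j : ℂ) • (σA j)ᵀ))).trace.re : ℝ) : ℂ) =
      (ρ * (((dA : ℂ) • (pA i : ℂ) • (σB i)ᵀ) ⊗ₖ
                ((dB : ℂ) • (pB j : ℂ) • (σA j)ᵀ))).trace := by
    intro i j
    exact (Complex.eq_re_of_ofReal_le (r := 0) (by simpa using hpos i j)).symm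
  refine ⟨e, f, fun i j => (ρ * (((dA : ℂ) • (pA i : ℂ) • (σB i)ᵀ) ⊗ₖ
                ((dB : ℂ) • (pB j : ℂ) • (σA j)ᵀ))).trace.re, he, hf, ?_, ?_, ?_⟩
  · intro i j
    exact (Complex.le_def.mp (hpos i j)).1
  · have ht := trace_tensorMap _ _ hTPA hTPB ρ
    rw [hρ.2, key] at ht
    simp only [Matrix.trace_sum, Matrix.trace_smul _ (proj _ ⊗ₖ proj _), Matrix.trace_kronecker,
      trace_proj he, trace_proj hf, smul_eq_mul, mul_one] at ht
    have := congrArg Complex.re ht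
    simpa only [Complex.re_sum, Complex.one_re] using this
  · simp only [hre]
    exact key

end
end
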